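/- Let c ≥ 2 and α, β, γ ∈ ℂ. Define the core tensors F_a(x,y) for a ∈ {1,2,3} by F_1 = I, F_2 = J', F_3 = J (evaluated at entry (x,y)); the 3×3 array of 2×2 matrices G by G_{1,1} = I, G_{1,2} = J', G_{1,3} = J, G_{2,2} = J, G_{3,3} = J', and all other G_{a,b} = 0; and H_a by H_1 = αI + βJ + γJ', H_2 = γJ, H_3 = βJ'. Then for all indices i, j ∈ {0,…,2^c−1} with binary digits x_1,…,x_c and y_1,…,y_c respectively (most significant first), the tridiagonal Toeplitz matrix satisfies (D^{(c)}_{α,β,γ})_{i,j} = Σ_{a_1,…,a_{c−1} ∈ {1,2,3}} F_{a_1}(x_1,y_1) · (∏_{k=2}^{c−1} G_{a_{k−1},a_k}(x_k,y_k)) · H_{a_{c−1}}(x_c,y_c), where for c = 2 the middle product is empty. In particular D^{(c)}_{α,β,γ} admits a quantized tensor train (QTT) representation with bond dimension 3. -/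

import Mathlib

/- STATEMENT 0: QTT representation of the tridiagonal Toeplitz matrix
   `D^{(c)}_{α,β,γ}` (Lemma 1 / Kazeev–Khoromskij), with bond dimension 3.
   Binary digits are most-significant-first: the k-th digit (1 ≤ k ≤ c) of an
   index `i ∈ {0,…,2^c−1}` is `Nat.testBit i (c - k)`. -/

noncomputable section

/-- The 2×2 identity matrix `I`, with rows/columns indexed by bits. -/
def mI : Bool → Bool → ℂ := fun x y => if x = y then 1 else 0

/-- The 2×2 matrix `J = [[0,1],[0,0]]`, with rows/columns indexed by bits. -/
def mJ : Bool → Bool → ℂ := fun x y => if x = false ∧ y = true then 1 else 0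

/-- The 2×2 matrix `J' = [[0,0],[1,0]]`, with rows/columns indexed by bits. -/
def mJ' : Bool → Bool → ℂ := fun x y => if x = true ∧ y = false then 1 else 0

/-- First core: `F_1 = I`, `F_2 = J'`, `F_3 = J`. -/
def Fcore : Fin 3 → Bool → Bool → ℂ := ![mI, mJ', mJ]

/-- Middle core: `G_{1,1} = I`, `G_{1,2} = J'`, `G_{1,3} = J`, `G_{2,2} = J`,
    `G_{3,3} = J'`, all other entries `0`. -/
def Gcore : Fin 3 → Fin 3 → Bool → Bool → ℂ :=
  ![![mI, mJ', mJ], ![0, mJ, 0], ![0, 0, mJ']]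

/-- Last core: `H_1 = αI + βJ + γJ'`, `H_2 = γJ`, `H_3 = βJ'`. -/
def Hcore (α β γ : ℂ) : Fin 3 → Bool → Bool → ℂ :=
  ![fun x y => α * mI x y + β * mJ x y + γ * mJ' x y,
    fun x y => γ * mJ x y,
    fun x y => β * mJ' x y]

/-- The `2^c × 2^c` tridiagonal Toeplitz matrix with diagonal `α`,
    superdiagonal `β` and subdiagonal `γ`. -/
def triD (c : ℕ) (α β γ : ℂ) : Matrix (Fin (2 ^ c)) (Fin (2 ^ c)) ℂ :=
  Matrix.of fun i j =>
    if (i : ℕ) = (j : ℕ) then α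
    else if (j : ℕ) = (i : ℕ) + 1 then β
    else if (i : ℕ) = (j : ℕ) + 1 then γ
    else 0

/-- `dig c i k` is the k-th binary digit (1 ≤ k ≤ c, most significant first)
    of `i ∈ {0,…,2^c−1}`. -/
def dig (c i k : ℕ) : Bool := Nat.testBit i (c - k)

/-! Reading the digits of `i` and `j` from the most significant one on, it is enough to remember the
difference `d ∈ {0, 1, -1}` of the two prefixes read so far: once the prefixes differ by more than
`1`, so do `i` and `j`. Appending digits `x`, `y` replaces `d` by `2 * d + x - y`, and `G(x, y)` is
the transition matrix of this three-state automaton. Hence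
`D i j = e₁ G(x₁, y₁) ⋯ G(x_c, y_c) (α, γ, β)ᵀ`; the cores `F = e₁ G` and `H = G (α, γ, β)ᵀ` absorb
the boundary vectors, and expanding the matrix product over paths of states gives the sum. -/

open scoped Matrix

section MatrixProduct

variable {ι R : Type*} [Fintype ι] [DecidableEq ι] {n : ℕ}

theorem vecMul_prod_ofFn_dotProduct [CommSemiring R] (M : Fin n → Matrix ι ι R) (v w : ι → R) :
    v ᵥ* (List.ofFn M).prod ⬝ᵥ w =
      ∑ a : Fin (n + 1) → ι,
        v (a 0) * (∏ t, M t (a t.castSucc) (a t.succ)) * w (a (Fin.last n)) := by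
  induction n generalizing v with
  | zero =>
    exact Fintype.sum_equiv (Equiv.funUnique (Fin 1) ι).symm _ _ fun _ => by simp
  | succ n ih =>
    rw [List.ofFn_succ, List.prod_cons, ← Matrix.vecMul_vecMul, ih,
      ← (Fin.consEquiv fun _ : Fin (n + 2) => ι).sum_comp, Fintype.sum_prod_type_right]
    refine Finset.sum_congr rfl fun a _ => ?_
    simp [Fin.consEquiv, Fin.prod_univ_succ, Matrix.vecMul, dotProduct, Finset.sum_mul, mul_assoc,
      ← Fin.succ_last]

theorem vecMul_prod_ofFn_eq_last [Semiring R] (M : Fin n → Matrix ι ι R) (v : Fin (n + 1) → ι → R)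
    (hv : ∀ t, v t.castSucc ᵥ* M t = v t.succ) :
    v 0 ᵥ* (List.ofFn M).prod = v (Fin.last n) := by
  induction n with
  | zero => simp
  | succ n ih =>
    rw [List.ofFn_succ, List.prod_cons, ← Matrix.vecMul_vecMul, ← Fin.castSucc_zero, hv 0]
    exact ih _ (fun t => v t.succ) fun t => hv t.succ

end MatrixProduct

theorem bit_eq_bit_iff {x y : Bool} {p q : ℕ} :
    Nat.bit x p = Nat.bit y q ↔ p = q ∧ x = y := by
  cases x <;> cases y <;> simp [Nat.bit_val] <;> omega

theorem bit_eq_bit_add_one_iff {x y : Bool} {p q : ℕ} :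
    Nat.bit x p = Nat.bit y q + 1 ↔
      p = q ∧ x = true ∧ y = false ∨ p = q + 1 ∧ x = false ∧ y = true := by
  cases x <;> cases y <;> simp [Nat.bit_val] <;> omega

theorem bit_testBit_shiftRight_succ (i m : ℕ) :
    Nat.bit (i.testBit m) (i >>> (m + 1)) = i >>> m := by
  simpa [Nat.testBit_shiftRight, Nat.shiftRight_add] using
    Nat.bit_testBit_zero_shiftRight_one (i >>> m)

/-- Indicator vector of the difference `p - q` of two prefixes of binary expansions. In order, its
entries stand for the differences `0`, `1` and `-1`; any other difference gives the zero vector. -/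
def diffState (p q : ℕ) : Fin 3 → ℂ :=
  ![if p = q then 1 else 0, if p = q + 1 then 1 else 0, if q = p + 1 then 1 else 0]

/-- The middle core `G` at the digits `x`, `y`, as a matrix in the bond indices. -/
def transferMatrix (x y : Bool) : Matrix (Fin 3) (Fin 3) ℂ :=
  Matrix.of fun a b => Gcore a b x y

theorem diffState_vecMul_transferMatrix (p q : ℕ) (x y : Bool) :
    diffState p q ᵥ* transferMatrix x y = diffState (Nat.bit x p) (Nat.bit y q) := by
  simp only [diffState, bit_eq_bit_iff, bit_eq_bit_add_one_iff]
  ext b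
  fin_cases b <;> cases x <;> cases y <;>
    simp [transferMatrix, Gcore, mI, mJ, mJ', Matrix.vecMul, dotProduct, Fin.sum_univ_three,
      eq_comm]

theorem diffState_shiftRight_succ_vecMul (i j m : ℕ) :
    diffState (i >>> (m + 1)) (j >>> (m + 1)) ᵥ* transferMatrix (i.testBit m) (j.testBit m) =
      diffState (i >>> m) (j >>> m) := by
  rw [diffState_vecMul_transferMatrix, bit_testBit_shiftRight_succ, bit_testBit_shiftRight_succ]

theorem diffState_zero_vecMul_transferMatrix (x y : Bool) :
    diffState 0 0 ᵥ* transferMatrix x y = fun a => Fcore a x y := by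
  ext a
  fin_cases a <;>
    simp [diffState, transferMatrix, Fcore, Gcore, Matrix.vecMul, dotProduct, Fin.sum_univ_three]

theorem transferMatrix_mulVec (α β γ : ℂ) (x y : Bool) :
    transferMatrix x y *ᵥ ![α, γ, β] = fun a => Hcore α β γ a x y := by
  ext a
  fin_cases a <;>
    simp [transferMatrix, Gcore, Hcore, Matrix.mulVec, dotProduct, Fin.sum_univ_three] <;> ring

theorem triD_apply_eq_dotProduct (c : ℕ) (α β γ : ℂ) (i j : Fin (2 ^ c)) :
    triD c α β γ i j = diffState i j ⬝ᵥ ![α, γ, β] := by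
  simp only [triD, diffState, Matrix.of_apply]
  split_ifs <;> first | omega | simp [dotProduct, Fin.sum_univ_three]

theorem diffState_shiftRight_eq_Fcore {m i j : ℕ} (hi : i < 2 ^ (m + 1)) (hj : j < 2 ^ (m + 1)) :
    diffState (i >>> m) (j >>> m) = fun a => Fcore a (i.testBit m) (j.testBit m) := by
  rw [← diffState_shiftRight_succ_vecMul, Nat.shiftRight_eq_zero i (m + 1) hi,
    Nat.shiftRight_eq_zero j (m + 1) hj, diffState_zero_vecMul_transferMatrix]

theorem diffState_dotProduct_eq_Hcore (α β γ : ℂ) (i j : ℕ) :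
    diffState i j ⬝ᵥ ![α, γ, β] =
      diffState (i >>> 1) (j >>> 1) ⬝ᵥ fun a => Hcore α β γ a (i.testBit 0) (j.testBit 0) := by
  rw [← transferMatrix_mulVec, Matrix.dotProduct_mulVec, diffState_shiftRight_succ_vecMul,
    Nat.shiftRight_zero, Nat.shiftRight_zero]

theorem diffState_shiftRight_vecMul_prod (i j m n : ℕ) :
    diffState (i >>> (m + n)) (j >>> (m + n)) ᵥ* (List.ofFn fun t : Fin n =>
      transferMatrix (i.testBit (m + t.rev)) (j.testBit (m + t.rev))).prod =
      diffState (i >>> m) (j >>> m) := by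
  let state (t : Fin (n + 1)) := diffState (i >>> (m + t.rev)) (j >>> (m + t.rev))
  have state_succ (t : Fin n) : state t.castSucc ᵥ*
      transferMatrix (i.testBit (m + t.rev)) (j.testBit (m + t.rev)) = state t.succ := by
    simp only [state, Fin.rev_castSucc, Fin.rev_succ]
    exact diffState_shiftRight_succ_vecMul i j (m + t.rev)
  simpa [state] using vecMul_prod_ofFn_eq_last _ state state_succ

theorem tridiagonal_qtt_rank_three (c : ℕ) (hc : 2 ≤ c) (α β γ : ℂ)
    (i j : Fin (2 ^ c)) :
    triD c α β γ i j =
      ∑ a : Fin (c - 1) → Fin 3,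
        Fcore (a ⟨0, by omega⟩) (dig c i 1) (dig c j 1) *
        (∏ t : Fin (c - 2),
          Gcore (a ⟨t.val, by have := t.isLt; omega⟩)
                (a ⟨t.val + 1, by have := t.isLt; omega⟩)
                (dig c i (t.val + 2)) (dig c j (t.val + 2))) *
        Hcore α β γ (a ⟨c - 2, by omega⟩) (dig c i c) (dig c j c) := by
  obtain ⟨n, rfl⟩ := Nat.exists_eq_add_of_le' hc
  let M (t : Fin n) := transferMatrix (dig (n + 2) i (t + 2)) (dig (n + 2) j (t + 2))
  have first_core : diffState ((i : ℕ) >>> (n + 1)) ((j : ℕ) >>> (n + 1)) =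
      fun a => Fcore a (dig (n + 2) i 1) (dig (n + 2) j 1) :=
    diffState_shiftRight_eq_Fcore i.isLt j.isLt
  have middle_cores : diffState ((i : ℕ) >>> (n + 1)) ((j : ℕ) >>> (n + 1)) ᵥ* (List.ofFn M).prod =
      diffState ((i : ℕ) >>> 1) ((j : ℕ) >>> 1) := by
    have digit (t : Fin n) : 1 + (t.rev : ℕ) = n + 2 - (t + 2) := by grind
    simpa only [M, dig, digit, add_comm 1 n] using diffState_shiftRight_vecMul_prod i j 1 n
  have last_core : triD (n + 2) α β γ i j = diffState ((i : ℕ) >>> 1) ((j : ℕ) >>> 1) ⬝ᵥ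
      fun a => Hcore α β γ a (dig (n + 2) i (n + 2)) (dig (n + 2) j (n + 2)) := by
    simp only [dig, Nat.sub_self]
    rw [triD_apply_eq_dotProduct, diffState_dotProduct_eq_Hcore]
  rw [last_core, ← middle_cores, first_core]
  exact vecMul_prod_ofFn_dotProduct M _ _
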